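/- arXiv:1102.4674 — 2 statements merged into one kernel-verified Lean document; each statement's English description precedes it below -/
import Mathlib

section
/- Lemma 3.1: Let t ≥ 4. Suppose x^1,…,x^k are circuits of A_{t,t+1} admitting a primitive relation h with x^k the cycle (v_1,u_2,v_2,u_3,…,v_t,u_{t+1}) and h_k = 1. Then there exist circuits x̄^1,…,x̄^{k+t} of A_{t+1,t+1} admitting a primitive relation h̄ with x̄^{k+t} the cycle (v_1,u_1,v_2,u_2,…,v_{t+1},u_{t+1}), h̄_{k+t} = 1, and ‖h̄‖₁ = ‖h‖₁ + t. -/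
/-- A `t × r` integer matrix lies in `ker_ℤ(A_{t,r})` iff all row sums and column sums vanish. -/
def tableKer {t r : ℕ} (x : Matrix (Fin t) (Fin r) ℤ) : Prop :=
  (∀ i, ∑ j, x i j = 0) ∧ (∀ j, ∑ i, x i j = 0)

/-- A circuit of `A_{t,r}`: a nonzero element of the kernel with inclusion-minimal support
whose nonzero entries are relatively prime. -/
def isCircuit {t r : ℕ} (x : Matrix (Fin t) (Fin r) ℤ) : Prop :=
  tableKer x ∧ x ≠ 0 ∧
  (∀ y : Matrix (Fin t) (Fin r) ℤ, tableKer y → y ≠ 0 →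
    (∀ i j, y i j ≠ 0 → x i j ≠ 0) → (∀ i j, x i j ≠ 0 → y i j ≠ 0)) ∧
  Finset.univ.gcd (fun p : Fin t × Fin r => x p.1 p.2) = 1

/-- `h` is a primitive relation on `x^1,…,x^k`: the `h i` are relatively prime positive
integers, `∑ h i • x i = 0`, and no `k−1` of the `x i` satisfy any nontrivial relation. -/
def isPrimitiveRelation {t r k : ℕ} (h : Fin k → ℤ)
    (x : Fin k → Matrix (Fin t) (Fin r) ℤ) : Prop :=
  (∀ i, 0 < h i) ∧ Finset.univ.gcd h = 1 ∧ (∑ i, h i • x i = 0) ∧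
  (∀ (c : Fin k → ℤ) (i₀ : Fin k), c i₀ = 0 → ∑ i, c i • x i = 0 → c = 0)

/-- The matrix of the alternating cycle `(v_1,u_{c+1},v_2,u_{c+2},…,v_t,u_{c+t})`
(zero-indexed: `+1` at `(i, c+i)`, `−1` at `(i+1 mod t, c+i)`). -/
def cycleMat (t r : ℕ) (c : ℕ) : Matrix (Fin t) (Fin r) ℤ :=
  fun i j => (if (j : ℕ) = c + (i : ℕ) then 1 else 0) -
    (if (j : ℕ) = c + (((i : ℕ) + (t - 1)) % t) then 1 else 0)

/-! Write `E i j` for the table with a single `1`. Cutting a cycle of length `n + 2` along the chord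
joining its first row to its penultimate column splits off a rectangle. Hence the padded cycle
`x^k` is the Hamiltonian cycle `∑ i, (E i (i + 1) - E i i)` of `K_{t+1,t+1}` minus the rectangle on
the rows `0`, `t` and the columns `t`, `0`. The `t + 1` rectangles on the rows `j`, `t` and the
columns `j - 1`, `j` add up to minus the target cycle `∑ i, (E i i - E (i + 1) i)`, because their
contributions to the row `t` telescope. Combining the two, the padded `x^k` is the sum of the two
Hamiltonian cycles and the rectangles with `0 < j < t`. The row `t` of the `j`-th of these circuits
is `e_j - e_{j-1}`, while that of a padded circuit is zero, so in any relation the new circuits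
share one coefficient and the relation descends to the old circuits. -/

section Preliminaries

lemma gcd_eq_one_of_gcd_dvd_one {ι α : Type*} [CommMonoidWithZero α] [NormalizedGCDMonoid α]
    {s : Finset ι} {f : ι → α} (hf : s.gcd f ∣ 1) : s.gcd f = 1 := by
  rw [← Finset.normalize_gcd]
  exact normalize_eq_one.2 (isUnit_of_dvd_one hf)

lemma apply_eq_apply_zero_of_apply_add_one {α : Type*} {n : ℕ} [NeZero n] {f : Fin n → α}
    (hf : ∀ l, f (l + 1) = f l) (l : Fin n) : f l = f 0 := by
  obtain ⟨m, rfl⟩ := Nat.exists_eq_succ_of_ne_zero (NeZero.ne n)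
  induction l using Fin.induction with
  | zero => rfl
  | succ i ih => rw [← Fin.coeSucc_eq_succ, hf, ih]

lemma neg_one_eq_last (n : ℕ) : (-1 : Fin (n + 1)) = Fin.last n :=
  neg_eq_iff_eq_neg.2 (Fin.neg_last n).symm

end Preliminaries

section Circuits

variable {t r : ℕ}

lemma isCircuit_of_forall_eq_smul {x : Matrix (Fin t) (Fin r) ℤ} (hx : tableKer x)
    {i₀ : Fin t} {j₀ : Fin r} (hx₀ : x i₀ j₀ = 1)
    (hunique : ∀ y, tableKer y → (∀ i j, y i j ≠ 0 → x i j ≠ 0) → ∃ c : ℤ, y = c • x) :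
    isCircuit x := by
  refine ⟨hx, ?_, fun y hy hy₀ hyx i j hij => ?_, gcd_eq_one_of_gcd_dvd_one ?_⟩
  · rintro rfl
    simp at hx₀
  · obtain ⟨c, rfl⟩ := hunique y hy hyx
    have hc : c ≠ 0 := by
      rintro rfl
      exact hy₀ (zero_smul ℤ x)
    exact mul_ne_zero hc hij
  · have hdvd := Finset.gcd_dvd (f := fun p : Fin t × Fin r => x p.1 p.2)
      (Finset.mem_univ (i₀, j₀))
    rwa [hx₀] at hdvd

end Circuits

section ExtendRows

variable {t t' r : ℕ}

/-- The linear map that places the rows of a table at the positions given by `e` and fills the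
remaining rows with zeros; it embeds `ker_ℤ(A_{t,r})` into `ker_ℤ(A_{t',r})`. -/
noncomputable def extendRows (e : Fin t ↪ Fin t') :
    Matrix (Fin t) (Fin r) ℤ →ₗ[ℤ] Matrix (Fin t') (Fin r) ℤ where
  toFun x := Function.extend e x 0
  map_add' x y :=
    (congrArg (Function.extend e (x + y)) (add_zero 0).symm).trans (Function.extend_add e x y 0 0)
  map_smul' c x :=
    (congrArg (Function.extend e (c • x)) (smul_zero c).symm).trans (Function.extend_smul c e x 0)

variable (e : Fin t ↪ Fin t') (x : Matrix (Fin t) (Fin r) ℤ)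

@[simp]
lemma extendRows_apply (i : Fin t) : extendRows e x (e i) = x i :=
  e.injective.extend_apply x (0 : Fin t' → Fin r → ℤ) i

lemma extendRows_apply_of_notMem_range {i : Fin t'} (hi : i ∉ Set.range e) :
    extendRows e x i = 0 :=
  Function.extend_apply' x (0 : Fin t' → Fin r → ℤ) i hi

lemma extendRows_injective :
    Function.Injective (extendRows (r := r) e) := by
  intro x y hxy
  ext i j
  rw [← extendRows_apply e x, hxy, extendRows_apply]

lemma extendRows_submatrix {y : Matrix (Fin t') (Fin r) ℤ}
    (hy : ∀ i ∉ Set.range e, y i = 0) : extendRows e (y.submatrix e id) = y := by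
  ext i j
  by_cases hi : i ∈ Set.range e
  · obtain ⟨i, rfl⟩ := hi
    rw [extendRows_apply, Matrix.submatrix_apply, id]
  · rw [extendRows_apply_of_notMem_range e _ hi, hy i hi]

lemma extendRows_single (i : Fin t) (j : Fin r) (c : ℤ) :
    extendRows e (Matrix.single i j c) = Matrix.single (e i) j c := by
  ext i' j'
  by_cases hi : i' ∈ Set.range e
  · obtain ⟨i', rfl⟩ := hi
    simp [Matrix.single_apply]
  · have hne : e i ≠ i' := fun h => hi ⟨i, h⟩
    simp [extendRows_apply_of_notMem_range e _ hi, hne]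

lemma tableKer_extendRows_iff : tableKer (extendRows e x) ↔ tableKer x := by
  have hcol (j : Fin r) : ∑ i, x i j = ∑ i, extendRows e x i j :=
    Fintype.sum_of_injective e e.injective _ _
      (fun i hi => congrFun (extendRows_apply_of_notMem_range e x hi) j) (fun i => by simp)
  refine and_congr ⟨fun h i => by simpa using h (e i), fun h i => ?_⟩ (by simp only [hcol])
  by_cases hi : i ∈ Set.range e
  · obtain ⟨i, rfl⟩ := hi
    simpa using h i
  · simp [extendRows_apply_of_notMem_range e x hi]

variable {x}

lemma isCircuit_extendRows (hx : isCircuit x) : isCircuit (extendRows e x) := by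
  obtain ⟨hker, hne, hmin, hgcd⟩ := hx
  refine ⟨(tableKer_extendRows_iff e x).2 hker, ?_, fun y hy hy₀ hyx => ?_,
    gcd_eq_one_of_gcd_dvd_one ?_⟩
  · rwa [Ne, map_eq_zero_iff _ (extendRows_injective e)]
  · have hy_off : ∀ i ∉ Set.range e, y i = 0 := fun i hi => funext fun j => by
      by_contra hij
      exact hyx i j hij (congrFun (extendRows_apply_of_notMem_range e x hi) j)
    obtain ⟨z, rfl⟩ : ∃ z, extendRows e z = y := ⟨_, extendRows_submatrix e hy_off⟩
    rw [tableKer_extendRows_iff] at hy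
    rw [Ne, map_eq_zero_iff _ (extendRows_injective e)] at hy₀
    have hxz := hmin z hy hy₀ fun i j => by simpa using hyx (e i) j
    intro i j hij
    by_cases hi : i ∈ Set.range e
    · obtain ⟨i, rfl⟩ := hi
      simpa using hxz i j (by simpa using hij)
    · exact absurd (congrFun (extendRows_apply_of_notMem_range e x hi) j) hij
  · rw [← hgcd]
    refine Finset.dvd_gcd fun p _ => ?_
    simpa using Finset.gcd_dvd (f := fun q : Fin t' × Fin r => extendRows e x q.1 q.2)
      (Finset.mem_univ (e p.1, p.2))

end ExtendRows

section AlternatingCycle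

variable {ι κ : Type*} [DecidableEq ι] [DecidableEq κ]

/-- The table of the closed walk `(a 0, b 0, a 1, b 1, …, a (n-1), b (n-1))` that alternates
between rows and columns: each edge `(a l, b l)` contributes `1` and each edge `(a (l + 1), b l)`
contributes `-1`, with indices modulo `n`. It is a cycle when `2 ≤ n` and `a`, `b` are injective. -/
def alternatingCycle {n : ℕ} [NeZero n] (a : Fin n → ι) (b : Fin n → κ) : Matrix ι κ ℤ :=
  ∑ l, (Matrix.single (a l) (b l) 1 - Matrix.single (a (l + 1)) (b l) 1)

lemma alternatingCycle_row {n : ℕ} [NeZero n] {a : Fin n → ι} (ha : Function.Injective a)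
    (b : Fin n → κ) (l : Fin n) :
    alternatingCycle a b (a l) = Pi.single (b l) 1 - Pi.single (b (l - 1)) 1 := by
  ext j
  have hsucc (m : Fin n) : m + 1 = l ↔ m = l - 1 := eq_sub_iff_add_eq.symm
  simp [alternatingCycle, Matrix.sum_apply, Matrix.single_apply, ha.eq_iff, hsucc, ite_and,
    Finset.sum_sub_distrib, Pi.single_apply, eq_comm]

lemma exists_edge_of_alternatingCycle_ne_zero {n : ℕ} [NeZero n] {a : Fin n → ι} {b : Fin n → κ}
    {i : ι} {j : κ} (hij : alternatingCycle a b i j ≠ 0) :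
    ∃ l, b l = j ∧ (i = a l ∨ i = a (l + 1)) := by
  rw [alternatingCycle, Matrix.sum_apply] at hij
  obtain ⟨l, -, hl⟩ := Finset.exists_ne_zero_of_sum_ne_zero hij
  refine ⟨l, ?_⟩
  contrapose! hl
  by_cases hb : b l = j
  · simp [(hl hb).1.symm, (hl hb).2.symm]
  · simp [hb]

lemma alternatingCycle_eq_add_rectangle {n : ℕ} (a : Fin (n + 2) → ι) (b : Fin (n + 2) → κ) :
    alternatingCycle a b =
      alternatingCycle (fun l : Fin (n + 1) => a l.castSucc) (fun l => b l.castSucc) +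
        alternatingCycle ![a 0, a (Fin.last _)] ![b (Fin.last n).castSucc, b (Fin.last _)] := by
  simp only [alternatingCycle, Fin.sum_univ_castSucc (n := n + 1), Fin.sum_univ_castSucc (n := n),
    Fin.sum_univ_two]
  simp only [Fin.coeSucc_eq_succ, Fin.succ_last, Nat.succ_eq_add_one, Fin.last_add_one,
    Fin.castSucc_succ, Fin.castSucc_zero, Matrix.cons_val_zero, Matrix.cons_val_one,
    Matrix.cons_val_fin_one, zero_add, Fin.isValue, Fin.reduceAdd]
  abel

variable {t t' r n : ℕ} [NeZero n]

lemma tableKer_alternatingCycle (a : Fin n → Fin t) (b : Fin n → Fin r) :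
    tableKer (alternatingCycle a b) := by
  simp only [tableKer, alternatingCycle, Matrix.sum_apply, Matrix.sub_apply]
  refine ⟨fun i => ?_, fun j => ?_⟩ <;> rw [Finset.sum_comm]
  · let atRow (i' : Fin t) : ℤ := if i' = i then 1 else 0
    have hedge (l : Fin n) : ∑ j, (Matrix.single (a l) (b l) (1 : ℤ) i j -
        Matrix.single (a (l + 1)) (b l) 1 i j) = atRow (a l) - atRow (a (l + 1)) := by
      simp [atRow, Matrix.single_apply, ite_and]
    simp only [hedge, Finset.sum_sub_distrib]
    exact sub_eq_zero.2 (Equiv.sum_comp (Equiv.addRight 1) fun l => atRow (a l)).symm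
  · refine Finset.sum_eq_zero fun l _ => ?_
    simp [Matrix.single_apply, and_comm, ite_and]

lemma extendRows_alternatingCycle (e : Fin t ↪ Fin t') (a : Fin n → Fin t) (b : Fin n → Fin r) :
    extendRows e (alternatingCycle a b) = alternatingCycle (e ∘ a) b := by
  simp only [alternatingCycle, map_sum, map_sub, extendRows_single, Function.comp_apply]

lemma tableKer.apply_edges_eq {n : ℕ} [n.AtLeastTwo] {t r : ℕ} {a : Fin n → Fin t}
    {b : Fin n → Fin r} (ha : Function.Injective a) (hb : Function.Injective b)
    {y : Matrix (Fin t) (Fin r) ℤ} (hy : tableKer y)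
    (hsupp : ∀ i j, y i j ≠ 0 → ∃ l, b l = j ∧ (i = a l ∨ i = a (l + 1))) (l : Fin n) :
    y (a l) (b l) = y (a 0) (b 0) ∧ y (a (l + 1)) (b l) = -y (a 0) (b 0) := by
  have hsucc (l : Fin n) : l + 1 ≠ l := by simp [Nat.AtLeastTwo.ne_one]
  have hcol (l : Fin n) : y (a l) (b l) + y (a (l + 1)) (b l) = 0 := by
    rw [← hy.2 (b l), Fintype.sum_eq_add (a l) (a (l + 1)) (ha.ne (hsucc l).symm)]
    rintro i ⟨hi, hi'⟩
    by_contra hne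
    obtain ⟨m, hm, hedge⟩ := hsupp i (b l) hne
    obtain rfl := hb hm
    tauto
  have hrow (l : Fin n) : y (a (l + 1)) (b (l + 1)) + y (a (l + 1)) (b l) = 0 := by
    rw [← hy.1 (a (l + 1)), Fintype.sum_eq_add (b (l + 1)) (b l) (hb.ne (hsucc l))]
    rintro j ⟨hj, hj'⟩
    by_contra hne
    obtain ⟨m, rfl, hedge⟩ := hsupp (a (l + 1)) j hne
    simp only [ha.eq_iff, add_left_inj] at hedge
    rcases hedge with rfl | rfl <;> contradiction
  have hconst : y (a l) (b l) = y (a 0) (b 0) :=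
    apply_eq_apply_zero_of_apply_add_one (f := fun l => y (a l) (b l))
      (fun l => by linarith [hcol l, hrow l]) l
  exact ⟨hconst, by linarith [hcol l]⟩

theorem isCircuit_alternatingCycle {n : ℕ} [n.AtLeastTwo] {t r : ℕ} {a : Fin n → Fin t}
    {b : Fin n → Fin r} (ha : Function.Injective a) (hb : Function.Injective b) :
    isCircuit (alternatingCycle a b) := by
  have hone : alternatingCycle a b (a 0) (b 0) = 1 := by
    rw [alternatingCycle_row ha, Pi.sub_apply, Pi.single_eq_same,
      Pi.single_eq_of_ne (hb.ne (by simp [Nat.AtLeastTwo.ne_one])), sub_zero]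
  refine isCircuit_of_forall_eq_smul (tableKer_alternatingCycle a b) hone
    fun y hy hsupp => ⟨y (a 0) (b 0), ?_⟩
  have hcycle := (tableKer_alternatingCycle a b).apply_edges_eq ha hb
    fun _ _ => exists_edge_of_alternatingCycle_ne_zero
  have hy_edges := hy.apply_edges_eq ha hb
    fun i j hij => exists_edge_of_alternatingCycle_ne_zero (hsupp i j hij)
  ext i j
  rw [Matrix.smul_apply, smul_eq_mul]
  by_cases hij : alternatingCycle a b i j = 0
  · rw [hij, mul_zero]
    exact not_not.1 fun hne => hsupp i j hne hij
  · obtain ⟨l, rfl, rfl | rfl⟩ := exists_edge_of_alternatingCycle_ne_zero hij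
    · rw [(hy_edges l).1, (hcycle l).1, hone, mul_one]
    · rw [(hy_edges l).2, (hcycle l).2, hone, mul_neg_one]

lemma cycleMat_eq_alternatingCycle {t r c : ℕ} [NeZero t] {b : Fin t → Fin r}
    (hb : ∀ i, (b i : ℕ) = c + i) : cycleMat t r c = alternatingCycle id b := by
  ext i j
  have hpred : ((i - 1 : Fin t) : ℕ) = (i + (t - 1)) % t := by
    obtain ⟨s, rfl⟩ := Nat.exists_eq_succ_of_ne_zero (NeZero.ne t)
    rcases s with _ | s
    · simp
    · rw [Fin.val_sub, Fin.val_one, add_comm]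
  rw [show alternatingCycle id b i = _ from alternatingCycle_row Function.injective_id b i]
  simp [cycleMat, Pi.single_apply, Fin.ext_iff, hb, hpred]

end AlternatingCycle

section CycleSplitting

/-- The `n + 2` circuits of `A_{n+2,n+2}` into which the padded cycle of `A_{n+1,n+2}` is split:
two Hamiltonian cycles at the ends and rectangles in between, indexed so that the last row of the
`j`-th one is `e_j - e_{j-1}`. -/
def cycleSplitting (n : ℕ) (j : Fin (n + 2)) : Matrix (Fin (n + 2)) (Fin (n + 2)) ℤ :=
  if j = 0 then alternatingCycle id (· + 1)
  else if j = Fin.last _ then alternatingCycle id id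
  else alternatingCycle ![j, Fin.last _] ![j - 1, j]

variable (n : ℕ)

lemma isCircuit_cycleSplitting (j : Fin (n + 2)) : isCircuit (cycleSplitting n j) := by
  unfold cycleSplitting
  split_ifs with h₀ hlast
  · exact isCircuit_alternatingCycle Function.injective_id (add_left_injective 1)
  · exact isCircuit_alternatingCycle Function.injective_id Function.injective_id
  · exact isCircuit_alternatingCycle (by simpa using hlast) (by simp)

lemma cycleSplitting_row_last (j : Fin (n + 2)) :
    cycleSplitting n j (Fin.last _) = Pi.single j 1 - Pi.single (j - 1) 1 := by
  unfold cycleSplitting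
  split_ifs with h₀ hlast
  · subst h₀
    simpa [neg_one_eq_last] using
      alternatingCycle_row Function.injective_id (· + 1) (Fin.last (n + 1))
  · subst hlast
    exact alternatingCycle_row Function.injective_id id _
  · exact alternatingCycle_row (a := ![j, Fin.last _]) (by simpa using hlast) ![j - 1, j] 1

lemma cycleSplitting_last : cycleSplitting n (Fin.last _) = cycleMat (n + 2) (n + 2) 0 := by
  rw [cycleMat_eq_alternatingCycle (b := id) (by simp)]
  simp [cycleSplitting]

lemma sum_rectangle_eq_neg_alternatingCycle :
    ∑ j : Fin (n + 2), alternatingCycle ![j, Fin.last _] ![j - 1, j] =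
      -alternatingCycle id id := by
  have hlast := Equiv.sum_comp (Equiv.subRight (1 : Fin (n + 2)))
    fun j => Matrix.single (Fin.last (n + 1)) j (1 : ℤ)
  have hdiag := Equiv.sum_comp (Equiv.addRight (1 : Fin (n + 2)))
    fun j => Matrix.single j (j - 1) (1 : ℤ)
  simp only [Equiv.subRight_apply] at hlast
  simp only [Equiv.coe_addRight, add_sub_cancel_right] at hdiag
  simp only [alternatingCycle, Fin.sum_univ_two]
  simp [Finset.sum_add_distrib, hlast, hdiag]

lemma alternatingCycle_add_one_eq_add_rectangle :
    alternatingCycle id (· + 1) = extendRows Fin.castSuccEmb (cycleMat (n + 1) (n + 2) 1) +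
      alternatingCycle ![0, Fin.last (n + 1)] ![0 - 1, 0] := by
  rw [cycleMat_eq_alternatingCycle (b := Fin.succ) (by simp [add_comm]),
    extendRows_alternatingCycle, alternatingCycle_eq_add_rectangle]
  simp [Fin.coeSucc_eq_succ, neg_one_eq_last]

theorem sum_cycleSplitting :
    ∑ j, cycleSplitting n j = extendRows Fin.castSuccEmb (cycleMat (n + 1) (n + 2) 1) := by
  let R (j : Fin (n + 2)) : Matrix (Fin (n + 2)) (Fin (n + 2)) ℤ :=
    alternatingCycle ![j, Fin.last _] ![j - 1, j]
  have hR_last : R (Fin.last _) = 0 := by simp [R, alternatingCycle]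
  have hsplit (j : Fin (n + 2)) : cycleSplitting n j = R j +
      ((if j = 0 then alternatingCycle id (· + 1) - R 0 else 0) +
        if j = Fin.last _ then alternatingCycle id id else 0) := by
    rcases eq_or_ne j 0 with rfl | h₀
    · simp [cycleSplitting]
    rcases eq_or_ne j (Fin.last _) with rfl | hlast
    · simp [cycleSplitting, hR_last]
    · simp [cycleSplitting, h₀, hlast, R]
  simp only [hsplit, Finset.sum_add_distrib, Finset.sum_ite_eq', Finset.mem_univ, if_true]
  rw [sum_rectangle_eq_neg_alternatingCycle, alternatingCycle_add_one_eq_add_rectangle]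
  abel

lemma coeff_eq_of_sum_smul_cycleSplitting_mem_range {d : Fin (n + 2) → ℤ}
    (hd : ∑ j, d j • cycleSplitting n j ∈
      LinearMap.range (extendRows (r := n + 2) (Fin.castSuccEmb (n := n + 1))))
    (j : Fin (n + 2)) : d j = d 0 := by
  obtain ⟨z, hz⟩ := hd
  refine apply_eq_apply_zero_of_apply_add_one (fun l => ?_) j
  have hrow := congrFun (congrFun hz (Fin.last _)) l
  rw [extendRows_apply_of_notMem_range _ _ (by simp)] at hrow
  have hpred (j : Fin (n + 2)) : l = j - 1 ↔ l + 1 = j := eq_sub_iff_add_eq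
  simp only [Matrix.sum_apply, Matrix.smul_apply, cycleSplitting_row_last, Pi.zero_apply,
    Pi.sub_apply, Pi.single_apply, hpred, smul_eq_mul, mul_sub, mul_ite, mul_one, mul_zero,
    Finset.sum_sub_distrib, Finset.sum_ite_eq, Finset.mem_univ, if_true] at hrow
  linarith

end CycleSplitting

section SpliceAt

variable {M : Type*} {k n : ℕ}

/-- The family obtained from `v` by putting `w 0` in place of `v i` and appending the other members
of `w` at the end. -/
def spliceAt (v : Fin k → M) (i : Fin k) (w : Fin (n + 1) → M) : Fin (k + n) → M :=
  Fin.append (Function.update v i (w 0)) (Fin.tail w)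

lemma forall_spliceAt {v : Fin k → M} {i : Fin k} {w : Fin (n + 1) → M} {p : M → Prop}
    (hv : ∀ l, p (v l)) (hw : ∀ j, p (w j)) (l : Fin (k + n)) : p (spliceAt v i w l) := by
  induction l using Fin.addCases with
  | left l =>
    rw [spliceAt, Fin.append_left]
    exact Function.forall_update_iff v (fun _ => p) |>.2 ⟨hw 0, fun l _ => hv l⟩ l
  | right j =>
    rw [spliceAt, Fin.append_right]
    exact hw j.succ

lemma sum_smul_spliceAt {R : Type*} [Ring R] [AddCommGroup M] [Module R M] (v : Fin k → M)
    (i : Fin k) (w : Fin (n + 1) → M) (c : Fin (k + n) → R) :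
    ∑ l, c l • spliceAt v i w l =
      ∑ l, c (Fin.castAdd n l) • v l - c (Fin.castAdd n i) • v i +
        ∑ j, (Fin.cons (c (Fin.castAdd n i)) fun j => c (Fin.natAdd k j) : Fin (n + 1) → R) j •
          w j := by
  have hupdate (l : Fin k) : c (Fin.castAdd n l) • Function.update v i (w 0) l =
      c (Fin.castAdd n l) • v l + if l = i then c (Fin.castAdd n i) • (w 0 - v i) else 0 := by
    rcases eq_or_ne l i with rfl | hl
    · simp [smul_sub]
    · simp [hl]
  simp only [Fin.sum_univ_add, spliceAt, Fin.append_left, Fin.append_right, hupdate, Fin.tail,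
    Finset.sum_add_distrib, Finset.sum_ite_eq', Finset.mem_univ, if_true, Fin.sum_univ_succ,
    Fin.cons_zero, Fin.cons_succ, smul_sub]
  abel

end SpliceAt

section PrimitiveRelation

variable {t r t' r' k n : ℕ} {x : Fin k → Matrix (Fin t) (Fin r) ℤ} {i : Fin k}
  {y : Fin (n + 1) → Matrix (Fin t') (Fin r') ℤ}
  {f : Matrix (Fin t) (Fin r) ℤ →ₗ[ℤ] Matrix (Fin t') (Fin r') ℤ}

lemma sum_smul_spliceAt_of_sum_eq (hsum : ∑ j, y j = f (x i)) {c : Fin (k + n) → ℤ}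
    (hc : ∀ j, c (Fin.natAdd k j) = c (Fin.castAdd n i)) :
    ∑ l, c l • spliceAt (f ∘ x) i y l = f (∑ l, c (Fin.castAdd n l) • x l) := by
  have hcons : (Fin.cons (c (Fin.castAdd n i)) fun j => c (Fin.natAdd k j) : Fin (n + 1) → ℤ) =
      fun _ => c (Fin.castAdd n i) := by
    ext j
    refine Fin.cases rfl hc j
  rw [sum_smul_spliceAt, hcons, ← Finset.smul_sum, hsum]
  simp only [Function.comp_apply, sub_add_cancel, map_sum, map_smul]

lemma coeff_natAdd_eq_of_sum_smul_spliceAt_eq_zero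
    (hy : ∀ d : Fin (n + 1) → ℤ, ∑ j, d j • y j ∈ LinearMap.range f → ∀ j, d j = d 0)
    {c : Fin (k + n) → ℤ} (hc : ∑ l, c l • spliceAt (f ∘ x) i y l = 0) (j : Fin n) :
    c (Fin.natAdd k j) = c (Fin.castAdd n i) := by
  rw [sum_smul_spliceAt, add_comm, add_eq_zero_iff_eq_neg, neg_sub] at hc
  refine hy (Fin.cons (c (Fin.castAdd n i)) fun j => c (Fin.natAdd k j))
    ⟨c (Fin.castAdd n i) • x i - ∑ l, c (Fin.castAdd n l) • x l, ?_⟩ j.succ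
  simp only [hc, map_sub, map_sum, map_smul, Function.comp_apply]

theorem isPrimitiveRelation.spliceAt {h : Fin k → ℤ} (hprim : isPrimitiveRelation h x)
    (hf : Function.Injective f) (hsum : ∑ j, y j = f (x i))
    (hy : ∀ d : Fin (n + 1) → ℤ, ∑ j, d j • y j ∈ LinearMap.range f → ∀ j, d j = d 0) :
    isPrimitiveRelation (Fin.append h fun _ : Fin n => h i) (spliceAt (f ∘ x) i y) := by
  obtain ⟨hpos, hgcd, hrel, hindep⟩ := hprim
  refine ⟨fun l => ?_, gcd_eq_one_of_gcd_dvd_one ?_, ?_, fun c l₀ hl₀ hc => ?_⟩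
  · induction l using Fin.addCases <;> simp [hpos]
  · rw [← hgcd]
    refine Finset.dvd_gcd fun l _ => ?_
    simpa using Finset.gcd_dvd (f := Fin.append h fun _ : Fin n => h i)
      (Finset.mem_univ (Fin.castAdd n l))
  · rw [sum_smul_spliceAt_of_sum_eq hsum (by simp)]
    simp only [Fin.append_left, hrel, map_zero]
  · have hnew := coeff_natAdd_eq_of_sum_smul_spliceAt_eq_zero hy hc
    have hold : ∑ l, c (Fin.castAdd n l) • x l = 0 :=
      hf (by rw [map_zero, ← sum_smul_spliceAt_of_sum_eq hsum hnew, hc])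
    obtain ⟨l₁, hl₁⟩ : ∃ l₁, c (Fin.castAdd n l₁) = 0 := by
      induction l₀ using Fin.addCases with
      | left l => exact ⟨l, hl₀⟩
      | right j => exact ⟨i, (hnew j).symm.trans hl₀⟩
    have hzero := congrFun (hindep (fun l => c (Fin.castAdd n l)) l₁ hl₁ hold)
    ext l
    induction l using Fin.addCases with
    | left l => exact hzero l
    | right j => exact (hnew j).trans (hzero i)

end PrimitiveRelation

theorem lemma_3_1_general (t k : ℕ) (x : Fin k → Matrix (Fin t) (Fin (t + 1)) ℤ) (h : Fin k → ℤ)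
    (i : Fin k) (hcirc : ∀ l, isCircuit (x l)) (hprim : isPrimitiveRelation h x)
    (hxi : x i = cycleMat t (t + 1) 1) :
    ∃ (x' : Fin (k + t) → Matrix (Fin (t + 1)) (Fin (t + 1)) ℤ) (h' : Fin (k + t) → ℤ),
      (∀ l, isCircuit (x' l)) ∧ isPrimitiveRelation h' x' ∧
      x' ⟨k + t - 1, by have := i.pos; lia⟩ = cycleMat (t + 1) (t + 1) 0 ∧
      h' ⟨k + t - 1, by have := i.pos; lia⟩ = h i ∧
      ∑ l, |h' l| = ∑ l, |h l| + t * h i := by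
  obtain _ | n := t
  · exact absurd (Subsingleton.elim _ _) (hcirc i).2.1
  have hlast : (⟨k + (n + 1) - 1, by lia⟩ : Fin (k + (n + 1))) = Fin.natAdd k (Fin.last n) :=
    Fin.ext (by simp)
  refine ⟨spliceAt (extendRows Fin.castSuccEmb ∘ x) i (cycleSplitting n),
    Fin.append h fun _ => h i,
    forall_spliceAt (fun l => isCircuit_extendRows _ (hcirc l)) (isCircuit_cycleSplitting n),
    hprim.spliceAt (extendRows_injective _) (hxi ▸ sum_cycleSplitting n)
      fun _ => coeff_eq_of_sum_smul_cycleSplitting_mem_range n, ?_, ?_, ?_⟩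
  · rw [hlast, spliceAt, Fin.append_right, ← cycleSplitting_last]
    rfl
  · rw [hlast, Fin.append_right]
  · simp [Fin.sum_univ_add, abs_of_pos (hprim.1 i)]

theorem lemma_3_1 (t k : ℕ) (ht : 4 ≤ t) (hk : 0 < k)
    (x : Fin k → Matrix (Fin t) (Fin (t+1)) ℤ) (h : Fin k → ℤ)
    (hcirc : ∀ i, isCircuit (x i)) (hprim : isPrimitiveRelation h x)
    (hxk : x ⟨k - 1, by omega⟩ = cycleMat t (t+1) 1)
    (hhk : h ⟨k - 1, by omega⟩ = 1) :
    ∃ (x' : Fin (k + t) → Matrix (Fin (t+1)) (Fin (t+1)) ℤ) (h' : Fin (k + t) → ℤ),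
      (∀ i, isCircuit (x' i)) ∧ isPrimitiveRelation h' x' ∧
      x' ⟨k + t - 1, by omega⟩ = cycleMat (t+1) (t+1) 0 ∧
      h' ⟨k + t - 1, by omega⟩ = 1 ∧
      (∑ i, |h' i|) = (∑ i, |h i|) + t := by
  simpa [hhk] using lemma_3_1_general t k x h ⟨k - 1, by omega⟩ hcirc hprim hxk
end

section
/- Lemma 3.2: Let r ≥ t ≥ 4. Suppose x^1,…,x^k are circuits of A_{t,r} admitting a primitive relation h with x^k the cycle (v_1,u_{r−t+1},v_2,u_{r−t+2},…,v_t,u_r) and h_k = 1. Then there exist circuits x̄^1,…,x̄^{k+t−1} of A_{t,r+1} admitting a primitive relation h̄ with x̄^{k+t−1} the cycle (v_1,u_{r−t+2},v_2,u_{r−t+3},…,v_t,u_{r+1}), h̄_i = (t−1)h_i for i = 1,…,k−1, and h̄_k = ⋯ = h̄_{k+t−1} = 1; in particular ‖h̄‖₁ = (t−1)(‖h‖₁ − 1) + t. -/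
open Function

section RelabelCols

variable {R ι κ κ' σ : Type*}

/-- The matrix whose column `f l` is column `l` of the given matrix, the columns outside the range
of `f` being zero. Only meant for injective `f`. -/
noncomputable def relabelCols [Semiring R] (f : κ → κ') : Matrix ι κ R →ₗ[R] Matrix ι κ' R :=
  (ExtendByZero.linearMap R f).compLeft ι

theorem relabelCols_apply [Semiring R] {f : κ → κ'} (hf : Injective f) (M : Matrix ι κ R) (i : ι)
    (l : κ) : relabelCols f M i (f l) = M i l :=
  hf.extend_apply _ _ _

theorem relabelCols_apply_of_notMem_range [Semiring R] {f : κ → κ'} {p : κ'} (hp : p ∉ Set.range f)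
    (M : Matrix ι κ R) (i : ι) : relabelCols f M i p = 0 :=
  extend_apply' _ _ _ hp

theorem exists_relabelCols_eq [Semiring R] {f : κ → κ'} (hf : Injective f) {N : Matrix ι κ' R}
    (hN : ∀ i, ∀ p ∉ Set.range f, N i p = 0) : ∃ M, relabelCols f M = N := by
  refine ⟨N.submatrix id f, Matrix.ext fun i p => ?_⟩
  by_cases hp : p ∈ Set.range f
  · obtain ⟨l, rfl⟩ := hp
    exact relabelCols_apply hf _ i l
  · rw [relabelCols_apply_of_notMem_range hp, hN i p hp]

theorem relabelCols_injective [Semiring R] {f : κ → κ'} (hf : Injective f) :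
    Injective (relabelCols f : Matrix ι κ R → Matrix ι κ' R) := fun M N h => by
  ext i l
  rw [← relabelCols_apply hf M, h, relabelCols_apply hf]

theorem sum_relabelCols_apply [Semiring R] [Fintype κ] [Fintype κ'] {f : κ → κ'} (hf : Injective f)
    (M : Matrix ι κ R) (i : ι) : ∑ p, relabelCols f M i p = ∑ l, M i l :=
  (Fintype.sum_of_injective f hf _ _ (fun _ hp => relabelCols_apply_of_notMem_range hp M i)
    (fun l => (relabelCols_apply hf M i l).symm)).symm

variable [DecidableEq κ]

theorem injective_update_of_notMem_range {f : κ → κ'} (hf : Injective f) {c : κ'}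
    (hc : c ∉ Set.range f) (l : κ) : Injective (update f l c) := by
  intro a b hab
  simp only [Set.mem_range, not_exists] at hc
  grind [Injective, update_apply]

theorem apply_notMem_range_update {f : κ → κ'} (hf : Injective f) {c : κ'} (hc : c ∉ Set.range f)
    (l : κ) : f l ∉ Set.range (update f l c) := by
  simp only [Set.mem_range, not_exists] at hc ⊢
  grind [Injective, update_apply]

theorem relabelCols_update_apply_fresh [Semiring R] {f : κ → κ'} (hf : Injective f) {c : κ'}
    (hc : c ∉ Set.range f) (M : Matrix ι κ R) (l : κ) (i : ι) :
    relabelCols (update f l c) M i c = M i l := by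
  simpa only [update_self] using
    relabelCols_apply (injective_update_of_notMem_range hf hc l) M i l

theorem relabelCols_update_apply [Semiring R] {f : κ → κ'} (hf : Injective f) {c : κ'}
    (hc : c ∉ Set.range f) (M : Matrix ι κ R) (l : κ) (i : ι) (l' : κ) :
    relabelCols (update f l c) M i (f l') = if l' = l then 0 else M i l' := by
  split_ifs with h
  · subst h
    exact relabelCols_apply_of_notMem_range (apply_notMem_range_update hf hc l') M i
  · simpa only [update_of_ne h] using
      relabelCols_apply (injective_update_of_notMem_range hf hc l) M i l'

theorem sum_relabelCols_update [Ring R] [Fintype κ] [Fintype σ] {f : κ → κ'} (hf : Injective f)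
    {c : κ'} (hc : c ∉ Set.range f) {e : σ → κ} (he : Injective e) {z : Matrix ι κ R}
    (hz : ∀ i, ∑ l, z i l = 0) (hcols : Set.range e = support z.col) :
    ∑ j, relabelCols (update f (e j) c) z = ((Fintype.card σ : R) - 1) • relabelCols f z := by
  classical
  have hz0 {l : κ} (hl : l ∉ Set.range e) (i : ι) : z i l = 0 := by
    rw [hcols, notMem_support] at hl
    exact congrFun hl i
  ext i p
  simp only [Matrix.sum_apply, Matrix.smul_apply, smul_eq_mul]
  by_cases hpc : p = c
  · subst hpc
    simp only [relabelCols_update_apply_fresh hf hc, relabelCols_apply_of_notMem_range hc, mul_zero]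
    rw [← hz i]
    exact Fintype.sum_of_injective e he _ _ (fun l hl => hz0 hl i) fun _ => rfl
  by_cases hp : p ∈ Set.range f
  · obtain ⟨l, rfl⟩ := hp
    simp only [relabelCols_update_apply hf hc, relabelCols_apply hf]
    by_cases hl : l ∈ Set.range e
    · obtain ⟨j₀, rfl⟩ := hl
      have hite (j : σ) : (if e j₀ = e j then 0 else z i (e j₀)) =
          z i (e j₀) - if j₀ = j then z i (e j₀) else 0 := by
        split_ifs <;> simp_all [he.eq_iff]
      simp [hite, sub_mul]
    · simp [hz0 hl i]
  · rw [relabelCols_apply_of_notMem_range hp, mul_zero]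
    refine Finset.sum_eq_zero fun j _ => relabelCols_apply_of_notMem_range ?_ z i
    simp only [Set.mem_range, not_exists] at hp ⊢
    grind [update_apply]

end RelabelCols

section Circuits

variable {t r n : ℕ} {f : Fin r → Fin n}

theorem finset_gcd_eq_one_of_dvd_one {α β : Type*} [CommMonoidWithZero α] [NormalizedGCDMonoid α]
    {s : Finset β} {g : β → α} (h : s.gcd g ∣ 1) : s.gcd g = 1 := by
  rw [← Finset.normalize_gcd, normalize_eq_one]
  exact isUnit_of_dvd_one h

theorem tableKer_relabelCols_iff (hf : Injective f) {M : Matrix (Fin t) (Fin r) ℤ} :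
    tableKer (relabelCols f M) ↔ tableKer M := by
  refine and_congr (forall_congr' fun i => by rw [sum_relabelCols_apply hf])
    ⟨fun h l => by simpa only [relabelCols_apply hf] using h (f l), fun h p => ?_⟩
  by_cases hp : p ∈ Set.range f
  · obtain ⟨l, rfl⟩ := hp
    simpa only [relabelCols_apply hf] using h l
  · simp only [relabelCols_apply_of_notMem_range hp, Finset.sum_const_zero]

theorem isCircuit_relabelCols {M : Matrix (Fin t) (Fin r) ℤ} (hM : isCircuit M)
    (hf : Injective f) : isCircuit (relabelCols f M) := by
  obtain ⟨hker, hne, hmin, hgcd⟩ := hM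
  have hsupp {i : Fin t} {p : Fin n} (hp : relabelCols f M i p ≠ 0) : p ∈ Set.range f :=
    by_contra fun h => hp (relabelCols_apply_of_notMem_range h M i)
  refine ⟨(tableKer_relabelCols_iff hf).2 hker, ?_, fun y hy hy0 hsub => ?_,
    finset_gcd_eq_one_of_dvd_one ?_⟩
  · rwa [Ne, (relabelCols_injective hf).eq_iff' (map_zero _)]
  · obtain ⟨y, rfl⟩ := exists_relabelCols_eq hf fun i p hp =>
      by_contra fun h => hp (hsupp (hsub i p h))
    intro i p hp
    obtain ⟨l, rfl⟩ := hsupp hp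
    rw [relabelCols_apply hf] at hp ⊢
    refine hmin y ((tableKer_relabelCols_iff hf).1 hy) (fun h => hy0 (by rw [h, map_zero]))
      (fun i l h => ?_) i l hp
    simpa only [relabelCols_apply hf] using hsub i (f l) (by rwa [relabelCols_apply hf])
  · rw [← hgcd]
    refine Finset.dvd_gcd fun ⟨i, l⟩ _ => ?_
    simpa only [relabelCols_apply hf] using
      Finset.gcd_dvd (f := fun p : Fin t × Fin n => relabelCols f M p.1 p.2)
        (Finset.mem_univ (i, f l))

theorem tableKer.smul_sub_smul {y z : Matrix (Fin t) (Fin r) ℤ} (hy : tableKer y) (hz : tableKer z)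
    (a b : ℤ) : tableKer (a • y - b • z) := by
  constructor <;> intro <;>
    simp [Finset.sum_sub_distrib, ← Finset.mul_sum, hy.1, hy.2, hz.1, hz.2]

theorem isCircuit.smul_eq_smul {y z : Matrix (Fin t) (Fin r) ℤ} (hz : isCircuit z)
    (hy : tableKer y) (hsub : ∀ i l, y i l ≠ 0 → z i l ≠ 0) (i : Fin t) (l : Fin r) :
    z i l • y = y i l • z := by
  by_cases hil : z i l = 0
  · have : y i l = 0 := by_contra fun h => hsub i l h hil
    rw [hil, this, zero_smul, zero_smul]
  by_contra hne
  refine hz.2.2.1 _ (hy.smul_sub_smul hz.1 (z i l) (y i l)) (sub_ne_zero.2 hne)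
    (fun i' l' h hz0 => h ?_) i l hil ?_
  · have : y i' l' = 0 := by_contra fun h => hsub i' l' h hz0
    simp [hz0, this]
  · simp [mul_comm]

theorem isCircuit.coeff_eq_of_sum_mul_eq_zero {σ : Type*} [Fintype σ]
    {z : Matrix (Fin t) (Fin r) ℤ} (hz : isCircuit z) {e : σ → Fin r} (he : Injective e)
    (hcols : ∀ j, e j ∈ support z.col) {b : σ → ℤ} (hb : ∀ i, ∑ j, b j * z i (e j) = 0)
    (j j' : σ) : b j = b j' := by
  obtain ⟨i, hi⟩ := ne_iff.1 (hcols j)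
  obtain ⟨i', hi'⟩ := ne_iff.1 (hcols j')
  set y : Matrix (Fin t) (Fin r) ℤ := relabelCols e fun i j => b j * z i (e j)
  have hye (i : Fin t) (j : σ) : y i (e j) = b j * z i (e j) := relabelCols_apply he _ i j
  have hy0 {l : Fin r} (hl : l ∉ Set.range e) (i : Fin t) : y i l = 0 :=
    relabelCols_apply_of_notMem_range hl _ i
  have hyker : tableKer y := by
    refine ⟨fun i => (sum_relabelCols_apply he _ i).trans (hb i), fun l => ?_⟩
    by_cases hl : l ∈ Set.range e
    · obtain ⟨j, rfl⟩ := hl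
      simp only [hye, ← Finset.mul_sum, hz.1.2, mul_zero]
    · simp only [hy0 hl, Finset.sum_const_zero]
  have hsub (i : Fin t) (l : Fin r) (h : y i l ≠ 0) : z i l ≠ 0 := by
    obtain ⟨j, rfl⟩ : l ∈ Set.range e := by_contra fun hl => h (hy0 hl i)
    exact right_ne_zero_of_mul (hye i j ▸ h)
  have hprop := congrFun₂ (hz.smul_eq_smul hyker hsub i (e j)) i' (e j')
  simp only [Matrix.smul_apply, smul_eq_mul, hye] at hprop
  refine mul_right_cancel₀ (mul_ne_zero hi hi') ?_
  simp only [Matrix.col_apply]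
  linear_combination -hprop

end Circuits

section Splitting

variable {t r n m s : ℕ}

/-- The circuits obtained from `x` by splitting its last member: the others are relabelled by `f`,
and the last one is replaced by `s` copies of itself relabelled by `f`, the `j`-th of them with the
column `e j` moved to the position `c`. -/
noncomputable def splitFamily (f : Fin r → Fin n) (c : Fin n) (e : Fin s → Fin r)
    (x : Fin (m + 1) → Matrix (Fin t) (Fin r) ℤ) : Fin (m + s) → Matrix (Fin t) (Fin n) ℤ :=
  Fin.append (fun i => relabelCols f (x i.castSucc))
    (fun j => relabelCols (update f (e j) c) (x (Fin.last m)))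

/-- The coefficients of the relation on `splitFamily f c e x` coming from the relation `h` on `x`
with `h (Fin.last m) = 1`. -/
def splitCoeff (s : ℕ) (h : Fin (m + 1) → ℤ) : Fin (m + s) → ℤ :=
  Fin.append (fun i => ((s : ℤ) - 1) * h i.castSucc) 1

theorem splitCoeff_of_lt (h : Fin (m + 1) → ℤ) (i : Fin (m + s)) (hi : (i : ℕ) < m) :
    splitCoeff s h i = ((s : ℤ) - 1) * h ⟨i, hi.trans m.lt_succ_self⟩ :=
  Fin.append_left _ _ (⟨i, hi⟩ : Fin m)

theorem splitCoeff_of_le (h : Fin (m + 1) → ℤ) (i : Fin (m + s)) (hi : m ≤ (i : ℕ)) :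
    splitCoeff s h i = 1 := by
  obtain ⟨j, rfl⟩ : ∃ j, Fin.natAdd m j = i := ⟨⟨i - m, by omega⟩, Fin.ext (Nat.add_sub_cancel' hi)⟩
  exact Fin.append_right _ _ j

theorem splitCoeff_pos (hs : 2 ≤ s) {h : Fin (m + 1) → ℤ} (hpos : ∀ i, 0 < h i)
    (i : Fin (m + s)) : 0 < splitCoeff s h i := by
  have hs' : (0 : ℤ) < s - 1 := by omega
  obtain hi | hi := lt_or_ge (i : ℕ) m
  · exact splitCoeff_of_lt h i hi ▸ mul_pos hs' (hpos _)
  · exact splitCoeff_of_le h i hi ▸ one_pos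

theorem sum_abs_splitCoeff (hs : 2 ≤ s) {h : Fin (m + 1) → ℤ} (hpos : ∀ i, 0 < h i)
    (hlast : h (Fin.last m) = 1) :
    ∑ i, |splitCoeff s h i| = ((s : ℤ) - 1) * (∑ i, |h i| - 1) + s := by
  simp only [abs_of_pos (splitCoeff_pos hs hpos _), abs_of_pos (hpos _)]
  simp [Fin.sum_univ_add, Fin.sum_univ_castSucc, splitCoeff, hlast, Finset.mul_sum]

variable {f : Fin r → Fin n} {c : Fin n} {e : Fin s → Fin r}
  {x : Fin (m + 1) → Matrix (Fin t) (Fin r) ℤ}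

theorem isCircuit_splitFamily (hf : Injective f) (hc : c ∉ Set.range f) (e : Fin s → Fin r)
    (hx : ∀ i, isCircuit (x i)) (i : Fin (m + s)) : isCircuit (splitFamily f c e x i) := by
  refine Fin.addCases (fun i => ?_) (fun j => ?_) i
  · simpa only [splitFamily, Fin.append_left] using isCircuit_relabelCols (hx _) hf
  · simpa only [splitFamily, Fin.append_right] using
      isCircuit_relabelCols (hx _) (injective_update_of_notMem_range hf hc _)

theorem sum_smul_splitFamily (f : Fin r → Fin n) (c : Fin n) (e : Fin s → Fin r)
    (x : Fin (m + 1) → Matrix (Fin t) (Fin r) ℤ) (a : Fin (m + s) → ℤ) :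
    ∑ i, a i • splitFamily f c e x i =
      relabelCols f (∑ i, a (Fin.castAdd s i) • x i.castSucc) +
        ∑ j, a (Fin.natAdd m j) • relabelCols (update f (e j) c) (x (Fin.last m)) := by
  simp only [Fin.sum_univ_add, splitFamily, Fin.append_left, Fin.append_right, map_sum, map_smul]

theorem sum_smul_splitFamily_apply_fresh (hf : Injective f) (hc : c ∉ Set.range f)
    (a : Fin (m + s) → ℤ) (i : Fin t) :
    (∑ i, a i • splitFamily f c e x i) i c =
      ∑ j, a (Fin.natAdd m j) * x (Fin.last m) i (e j) := by
  rw [sum_smul_splitFamily]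
  simp only [Matrix.add_apply, Matrix.sum_apply, Matrix.smul_apply, smul_eq_mul,
    relabelCols_apply_of_notMem_range hc, relabelCols_update_apply_fresh hf hc, zero_add]

theorem sum_smul_splitFamily_of_const (hf : Injective f) (hc : c ∉ Set.range f) (he : Injective e)
    (hrow : ∀ i, ∑ l, x (Fin.last m) i l = 0)
    (hcols : Set.range e = support (x (Fin.last m)).col)
    {a : Fin (m + s) → ℤ} {β : ℤ} (ha : ∀ j, a (Fin.natAdd m j) = β) :
    ∑ i, a i • splitFamily f c e x i =
      relabelCols f (∑ i, a (Fin.castAdd s i) • x i.castSucc +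
        (β * ((s : ℤ) - 1)) • x (Fin.last m)) := by
  simp only [sum_smul_splitFamily, ha, ← Finset.smul_sum,
    sum_relabelCols_update hf hc he hrow hcols, Fintype.card_fin, map_add, map_smul, mul_smul]

theorem sum_splitCoeff_smul_splitFamily (hf : Injective f) (hc : c ∉ Set.range f)
    (he : Injective e) (hrow : ∀ i, ∑ l, x (Fin.last m) i l = 0)
    (hcols : Set.range e = support (x (Fin.last m)).col) {h : Fin (m + 1) → ℤ}
    (hlast : h (Fin.last m) = 1) (hsum : ∑ i, h i • x i = 0) :
    ∑ i, splitCoeff s h i • splitFamily f c e x i = 0 := by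
  have hscaled : ∑ i : Fin m, splitCoeff s h (Fin.castAdd s i) • x i.castSucc +
      (1 * ((s : ℤ) - 1)) • x (Fin.last m) = ((s : ℤ) - 1) • ∑ i, h i • x i := by
    simp only [splitCoeff, Fin.append_left, Fin.sum_univ_castSucc, hlast, one_mul, one_smul,
      smul_add, Finset.smul_sum, mul_smul]
  rw [sum_smul_splitFamily_of_const hf hc he hrow hcols (β := 1)
    (fun j => splitCoeff_of_le h _ (Nat.le_add_right m j)), hscaled, hsum, smul_zero, map_zero]

theorem eq_zero_of_sum_smul_splitFamily_eq_zero (hs : 2 ≤ s) (hf : Injective f)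
    (hc : c ∉ Set.range f) (he : Injective e) (hz : isCircuit (x (Fin.last m)))
    (hcols : Set.range e = support (x (Fin.last m)).col)
    (hind : ∀ (d : Fin (m + 1) → ℤ) i₀, d i₀ = 0 → ∑ i, d i • x i = 0 → d = 0)
    {a : Fin (m + s) → ℤ} {i₀ : Fin (m + s)} (hi₀ : a i₀ = 0)
    (hsum : ∑ i, a i • splitFamily f c e x i = 0) : a = 0 := by
  obtain ⟨β, hβ⟩ : ∃ β, ∀ j, a (Fin.natAdd m j) = β :=
    ⟨_, fun j => hz.coeff_eq_of_sum_mul_eq_zero he (fun j => hcols ▸ Set.mem_range_self j)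
      (fun i => by rw [← sum_smul_splitFamily_apply_fresh hf hc, hsum, Matrix.zero_apply])
      j ⟨0, by omega⟩⟩
  let d : Fin (m + 1) → ℤ := Fin.snoc (α := fun _ => ℤ) (a ∘ Fin.castAdd s) (β * ((s : ℤ) - 1))
  have hd_castSucc (i : Fin m) : d i.castSucc = a (Fin.castAdd s i) :=
    Fin.snoc_castSucc (α := fun _ => ℤ) _ _ i
  have hd_last : d (Fin.last m) = β * ((s : ℤ) - 1) := Fin.snoc_last (α := fun _ => ℤ) _ _
  have hdsum : ∑ i, d i • x i = 0 := by
    rw [sum_smul_splitFamily_of_const hf hc he hz.1.1 hcols hβ] at hsum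
    simpa only [Fin.sum_univ_castSucc, hd_castSucc, hd_last] using
      relabelCols_injective hf (hsum.trans (map_zero _).symm)
  have hd : d = 0 := by
    induction i₀ using Fin.addCases with
    | left i => exact hind d i.castSucc (by rw [hd_castSucc, hi₀]) hdsum
    | right j => exact hind d (Fin.last m) (by rw [hd_last, ← hβ j, hi₀, zero_mul]) hdsum
  have hβ0 : β = 0 :=
    (mul_eq_zero.1 (hd_last.symm.trans (congrFun hd _))).resolve_right (by omega)
  funext i
  induction i using Fin.addCases with
  | left i => exact (hd_castSucc i).symm.trans (congrFun hd _)
  | right j => exact (hβ j).trans hβ0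

theorem isPrimitiveRelation_splitFamily (hs : 2 ≤ s) (hf : Injective f) (hc : c ∉ Set.range f)
    (he : Injective e) (hz : isCircuit (x (Fin.last m)))
    (hcols : Set.range e = support (x (Fin.last m)).col) {h : Fin (m + 1) → ℤ}
    (hlast : h (Fin.last m) = 1) (hprim : isPrimitiveRelation h x) :
    isPrimitiveRelation (splitCoeff s h) (splitFamily f c e x) := by
  obtain ⟨hpos, -, hsum, hind⟩ := hprim
  refine ⟨splitCoeff_pos hs hpos, finset_gcd_eq_one_of_dvd_one ?_,
    sum_splitCoeff_smul_splitFamily hf hc he hz.1.1 hcols hlast hsum, fun a i₀ hi₀ =>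
    eq_zero_of_sum_smul_splitFamily_eq_zero hs hf hc he hz hcols hind hi₀⟩
  rw [← splitCoeff_of_le h (Fin.natAdd m ⟨0, by omega⟩ : Fin (m + s)) (Nat.le_add_right _ _)]
  exact Finset.gcd_dvd (Finset.mem_univ _)

theorem isPrimitiveRelation.comp_cast {k k' : ℕ} {h : Fin k → ℤ}
    {x : Fin k → Matrix (Fin t) (Fin r) ℤ} (hprim : isPrimitiveRelation h x) (hk : k' = k) :
    isPrimitiveRelation (h ∘ Fin.cast hk) (x ∘ Fin.cast hk) := by
  subst hk
  exact hprim

end Splitting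

section Cycle

theorem relabelCols_succ_cycleMat (t r c : ℕ) :
    relabelCols Fin.succ (cycleMat t r c) = cycleMat t (r + 1) (c + 1) := by
  ext i p
  cases p using Fin.cases with
  | zero =>
    rw [relabelCols_apply_of_notMem_range (by simp)]
    simp [cycleMat, add_right_comm c 1]
  | succ l =>
    rw [relabelCols_apply (Fin.succ_injective r)]
    simp [cycleMat, add_right_comm c 1]

theorem injective_castLE_comp_natAdd {c t r : ℕ} (h : c + t ≤ r) :
    Injective (Fin.castLE h ∘ Fin.natAdd c) :=
  (Fin.castLE_injective h).comp (Fin.natAdd_injective t c)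

theorem range_eq_support_col_cycleMat {t r c : ℕ} (ht : 2 ≤ t) (h : c + t ≤ r) :
    Set.range (Fin.castLE h ∘ Fin.natAdd c) = support (cycleMat t r c).col := by
  ext l
  simp only [Set.mem_range, comp_apply, mem_support, ne_iff, Matrix.col_apply, Pi.zero_apply]
  constructor
  · rintro ⟨j, rfl⟩
    have hpred : (j : ℕ) ≠ (j + (t - 1)) % t := by
      intro hj
      have hmod : (j : ℕ) ≡ j + (t - 1) [MOD t] := (Nat.mod_eq_of_lt j.2).trans hj
      have hdvd := (Nat.modEq_iff_dvd' (Nat.le_add_right _ _)).1 hmod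
      have := Nat.le_of_dvd (by omega) hdvd
      omega
    exact ⟨j, by simp [cycleMat, hpred]⟩
  · rintro ⟨i, hi⟩
    have hmod : ((i : ℕ) + (t - 1)) % t < t := Nat.mod_lt _ (by omega)
    have hl : (l : ℕ) = c + i ∨ (l : ℕ) = c + (i + (t - 1)) % t := by
      by_contra! hl
      simp [cycleMat, hl] at hi
    obtain hl | hl := hl
    · exact ⟨i, Fin.ext hl.symm⟩
    · exact ⟨⟨_, hmod⟩, Fin.ext hl.symm⟩

end Cycle

theorem lemma_3_2_general {t r n k s : ℕ} (hs : 2 ≤ s) (hk : 0 < k)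
    (x : Fin k → Matrix (Fin t) (Fin r) ℤ) (h : Fin k → ℤ)
    (hcirc : ∀ i, isCircuit (x i)) (hprim : isPrimitiveRelation h x)
    (hhk : h ⟨k - 1, by omega⟩ = 1)
    {e : Fin s → Fin r} (he : Injective e)
    (hcols : Set.range e = support (x ⟨k - 1, by omega⟩).col)
    {g : Fin r → Fin n} (hg : Injective g) {c : Fin n} (hc : c ∉ Set.range g) :
    ∃ (x' : Fin (k + s - 1) → Matrix (Fin t) (Fin n) ℤ) (h' : Fin (k + s - 1) → ℤ),
      (∀ i, isCircuit (x' i)) ∧ isPrimitiveRelation h' x' ∧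
      x' ⟨k + s - 2, by omega⟩ = relabelCols g (x ⟨k - 1, by omega⟩) ∧
      (∀ (i : Fin (k + s - 1)) (hik : (i : ℕ) < k - 1),
        h' i = ((s : ℤ) - 1) * h ⟨(i : ℕ), by omega⟩) ∧
      (∀ i : Fin (k + s - 1), k - 1 ≤ (i : ℕ) → h' i = 1) ∧
      (∑ i, |h' i|) = ((s : ℤ) - 1) * ((∑ i, |h i|) - 1) + s := by
  obtain ⟨m, rfl⟩ := Nat.exists_eq_add_one.2 hk
  -- `f` is chosen so that moving its column `l₀` to the then fresh position `g l₀` restores `g`.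
  let l₀ := e ⟨s - 1, by omega⟩
  let f := update g l₀ c
  have hf : Injective f := injective_update_of_notMem_range hg hc l₀
  have hfresh : g l₀ ∉ Set.range f := apply_notMem_range_update hg hc l₀
  have hms : m + 1 + s - 1 = m + s := by omega
  refine ⟨splitFamily f (g l₀) e x ∘ Fin.cast hms, splitCoeff s h ∘ Fin.cast hms,
    fun i => isCircuit_splitFamily hf hfresh e hcirc _,
    (isPrimitiveRelation_splitFamily hs hf hfresh he (hcirc _) hcols hhk hprim).comp_cast hms, ?_,
    fun i hi => splitCoeff_of_lt h (i.cast hms) hi,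
    fun i hi => splitCoeff_of_le h (i.cast hms) hi, ?_⟩
  · have hlast : Fin.cast hms ⟨m + 1 + s - 2, by omega⟩ = Fin.natAdd m ⟨s - 1, by omega⟩ :=
      Fin.ext (by simp only [Fin.val_cast, Fin.val_natAdd]; omega)
    rw [comp_apply, hlast, splitFamily, Fin.append_right, update_idem, update_eq_self]
    rfl
  · rw [← sum_abs_splitCoeff hs hprim.1 hhk]
    exact (finCongr hms).sum_comp fun i => |splitCoeff s h i|

theorem lemma_3_2 (t r k : ℕ) (ht : 4 ≤ t) (htr : t ≤ r) (hk : 0 < k)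
    (x : Fin k → Matrix (Fin t) (Fin r) ℤ) (h : Fin k → ℤ)
    (hcirc : ∀ i, isCircuit (x i)) (hprim : isPrimitiveRelation h x)
    (hxk : x ⟨k - 1, by omega⟩ = cycleMat t r (r - t))
    (hhk : h ⟨k - 1, by omega⟩ = 1) :
    ∃ (x' : Fin (k + t - 1) → Matrix (Fin t) (Fin (r+1)) ℤ) (h' : Fin (k + t - 1) → ℤ),
      (∀ i, isCircuit (x' i)) ∧ isPrimitiveRelation h' x' ∧
      x' ⟨k + t - 2, by omega⟩ = cycleMat t (r+1) (r - t + 1) ∧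
      (∀ (i : Fin (k + t - 1)) (hik : (i : ℕ) < k - 1),
        h' i = ((t : ℤ) - 1) * h ⟨(i : ℕ), by omega⟩) ∧
      (∀ i : Fin (k + t - 1), k - 1 ≤ (i : ℕ) → h' i = 1) ∧
      (∑ i, |h' i|) = ((t : ℤ) - 1) * ((∑ i, |h i|) - 1) + t := by
  have hcols := range_eq_support_col_cycleMat (by omega) (Nat.sub_add_cancel htr).le
  simpa only [hxk, relabelCols_succ_cycleMat] using
    lemma_3_2_general (by omega) hk x h hcirc hprim hhk (injective_castLE_comp_natAdd _)
      (hxk ▸ hcols) (Fin.succ_injective r) (c := 0) (by simp)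
end
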